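/- arXiv:0909.5648 — 2 statements merged into one kernel-verified Lean document; each statement's English description precedes it below -/
import Mathlib

section
/- Let p be an odd prime, let a be a positive integer, and let A, B be integers with Δ = A² - 4B and p ∤ 2BΔ. Then u_{p^a-(Δ/p^a)}(A,B) ≡ B^{((Δ/p)-(Δ/p^a))/2}·(Δ/p^{a-1})·u_{p-(Δ/p)}(A,B) (mod p²) and v_{p^a-(Δ/p^a)}(A,B) ≡ B^{((Δ/p)-(Δ/p^a))/2}·v_{p-(Δ/p)}(A,B) (mod p²), where negative powers of B are interpreted via the inverse of B in ℤ/p²ℤ. -/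
/-- The Lucas sequence `u_n(A,B)` with `u_0 = 0`, `u_1 = 1`,
`u_{n+1} = A u_n - B u_{n-1}`. -/
def lucasU (A B : ℤ) : ℕ → ℤ
  | 0 => 0
  | 1 => 1
  | n + 2 => A * lucasU A B (n + 1) - B * lucasU A B n

/-- The Lucas sequence `v_n(A,B)` with `v_0 = 2`, `v_1 = A`,
`v_{n+1} = A v_n - B v_{n-1}`. -/
def lucasV (A B : ℤ) : ℕ → ℤ
  | 0 => 2
  | 1 => A
  | n + 2 => A * lucasV A B (n + 1) - B * lucasV A B n

/-- `x ^ e` for `x` in `ℤ/nℤ` and an integer exponent `e`, negative powers being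
interpreted via the inverse in `ℤ/nℤ`. -/
def zmodZPow {n : ℕ} (x : ZMod n) (e : ℤ) : ZMod n :=
  x ^ e.toNat * x⁻¹ ^ (-e).toNat

theorem luc_u {S : Type*} [CommRing S] (A B : ℤ) (x y : S) (h1 : x + y = A) (h2 : x * y = B)
    (n : ℕ) : (lucasU A B n : S) * (x - y) = x ^ n - y ^ n ∧
      (lucasU A B (n + 1) : S) * (x - y) = x ^ (n + 1) - y ^ (n + 1) := by
  induction n with
  | zero => simp [lucasU]
  | succ n ih =>
    refine ⟨ih.2, ?_⟩
    obtain ⟨i1, i2⟩ := ih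
    simp only [lucasU]
    push_cast
    rw [← h1, ← h2]
    linear_combination (x + y) * i2 - (x * y) * i1

theorem luc_v {S : Type*} [CommRing S] (A B : ℤ) (x y : S) (h1 : x + y = A) (h2 : x * y = B)
    (n : ℕ) : (lucasV A B n : S) = x ^ n + y ^ n ∧
      (lucasV A B (n + 1) : S) = x ^ (n + 1) + y ^ (n + 1) := by
  induction n with
  | zero => simp [lucasV, h1]; norm_num
  | succ n ih =>
    refine ⟨ih.2, ?_⟩
    obtain ⟨i1, i2⟩ := ih
    simp only [lucasV]
    push_cast
    rw [← h1, ← h2]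
    linear_combination (x + y) * i2 - (x * y) * i1

theorem int_dvd_cast {S : Type*} [CommRing S] {p : ℕ} {m : ℤ} (h : (m : ZMod p) = 0) :
    (p : S) ∣ (m : S) := by
  obtain ⟨c, hc⟩ := (ZMod.intCast_zmod_eq_zero_iff_dvd m p).1 h
  exact ⟨c, by rw [hc]; push_cast; ring⟩

theorem frob {S : Type*} [CommRing S] {p : ℕ} (hp : p.Prime) (hp2 : p ≠ 2) (A B : ℤ) (x y : S)
    (h1 : x + y = A) (h2 : x * y = B) (hu : IsUnit (2 : S)) :
    (p : S) ∣ 2 * x ^ p - (A + (jacobiSym (A ^ 2 - 4 * B) p : S) * (x - y)) := by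
  have : Fact p.Prime := ⟨hp⟩
  have hA : (p : S) ∣ ((A ^ p - A : ℤ) : S) := int_dvd_cast (by push_cast; simp [ZMod.pow_card])
  have h2p : (p : S) ∣ ((2 ^ p - 2 : ℤ) : S) := int_dvd_cast (by push_cast; simp [ZMod.pow_card])
  have hD : (p : S) ∣ (((A ^ 2 - 4 * B) ^ (p / 2) - jacobiSym (A ^ 2 - 4 * B) p : ℤ) : S) :=
    int_dvd_cast (by
      rw [← jacobiSym.legendreSym.to_jacobiSym, Int.cast_sub, legendreSym.eq_pow]
      push_cast; simp)
  obtain ⟨r, hr⟩ := exists_add_pow_prime_eq hp (A : S) (x - y)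
  obtain ⟨a, ha⟩ := hA
  obtain ⟨b, hb⟩ := h2p
  obtain ⟨d, hd⟩ := hD
  have hodd : p = 2 * (p / 2) + 1 := by
    have := hp.eq_two_or_odd; omega
  have hx : (A : S) + (x - y) = 2 * x := by rw [← h1]; ring
  rw [hx, mul_pow] at hr
  have hsq : (x - y) ^ p = (((A : S) ^ 2 - 4 * B) ^ (p / 2)) * (x - y) := by
    conv_lhs => rw [hodd]
    rw [pow_succ, pow_mul, ← h1, ← h2]
    congr 2
    ring
  push_cast at ha hb hd
  refine ⟨a + A * (x - y) * r + d * (x - y) - b * x ^ p, ?_⟩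
  linear_combination hr + ha - hb * x ^ p + hd * (x - y) + hsq

theorem frob_pos {S : Type*} [CommRing S] {p : ℕ} (hp : p.Prime) (hp2 : p ≠ 2) (A B : ℤ)
    (x y : S) (h1 : x + y = A) (h2 : x * y = B) (hu : IsUnit (2 : S))
    (hj : jacobiSym (A ^ 2 - 4 * B) p = 1) : (p : S) ∣ x ^ p - x := by
  have := frob hp hp2 A B x y h1 h2 hu
  rw [hj, ← h1] at this
  rw [← hu.dvd_mul_left]
  convert this using 1
  push_cast; ring

theorem frob_neg {S : Type*} [CommRing S] {p : ℕ} (hp : p.Prime) (hp2 : p ≠ 2) (A B : ℤ)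
    (x y : S) (h1 : x + y = A) (h2 : x * y = B) (hu : IsUnit (2 : S))
    (hj : jacobiSym (A ^ 2 - 4 * B) p = -1) : (p : S) ∣ x ^ p - y := by
  have := frob hp hp2 A B x y h1 h2 hu
  rw [hj, ← h1] at this
  rw [← hu.dvd_mul_left]
  convert this using 1
  push_cast; ring

theorem lift_pow {S : Type*} [CommRing S] {p : ℕ} (h0 : (p : S) ^ 2 = 0) {x y : S}
    (h : (p : S) ∣ x - y) : x ^ p = y ^ p := by
  have := dvd_sub_pow_of_dvd_sub h 1
  rw [show 1 + 1 = 2 from rfl, h0, zero_dvd_iff, pow_one] at this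
  exact sub_eq_zero.1 this

theorem pow_pos_case {S : Type*} [CommRing S] {p : ℕ} {x : S} (h : (x ^ p) ^ p = x ^ p) (k : ℕ) :
    x ^ p ^ (k + 1) = x ^ p := by
  induction k with
  | zero => simp
  | succ k ih => rw [pow_succ, pow_mul, ih, h]

theorem pow_neg_case {S : Type*} [CommRing S] {p : ℕ} {x y : S} (h : (x ^ p) ^ p = y ^ p)
    (h' : (y ^ p) ^ p = x ^ p) (k : ℕ) :
    x ^ p ^ (2 * k + 1) = x ^ p ∧ x ^ p ^ (2 * k + 2) = y ^ p := by
  induction k with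
  | zero => exact ⟨by simp, by simp [pow_two, pow_mul, h]⟩
  | succ k ih =>
    have h3 : x ^ p ^ (2 * (k + 1) + 1) = x ^ p := by
      rw [show 2 * (k + 1) + 1 = (2 * k + 2) + 1 by ring, pow_succ, pow_mul, ih.2, h']
    exact ⟨h3, by rw [show 2 * (k + 1) + 2 = (2 * (k + 1) + 1) + 1 by ring, pow_succ, pow_mul, h3, h]⟩

theorem unit_cast {p : ℕ} (hp : p.Prime) {m : ℤ} (h : ¬ (p : ℤ) ∣ m) :
    IsUnit (m : ZMod (p ^ 2)) := by
  rw [ZMod.coe_int_isUnit_iff_isCoprime]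
  push_cast
  exact ((Nat.prime_iff_prime_int.1 hp).coprime_iff_not_dvd.2 h).pow_left

theorem quad_ext (R : Type) [CommRing R] (A B : ℤ) : ∃ (S : Type) (_ : CommRing S) (f : R →+* S),
    Function.Injective f ∧ ∃ x y : S, x + y = A ∧ x * y = B := by
  refine ⟨QuadraticAlgebra R (-(B : R)) (A : R), inferInstance, algebraMap _ _,
    QuadraticAlgebra.algebraMap_injective, ⟨0, 1⟩, ⟨A, -1⟩, ?_, ?_⟩
  · ext <;> simp
  · ext <;> simp

/-- transfer from the quadratic extension back to the base ring -/
theorem transfer {R S : Type*} [CommRing R] [CommRing S] (f : R →+* S)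
    (hf : Function.Injective f) (A B : ℤ) (x y : S) (h1 : x + y = A) (h2 : x * y = B)
    (hd : IsUnit (x - y)) (m n : ℕ) (c e : R)
    (hU : x ^ m - y ^ m = f c * f e * (x ^ n - y ^ n))
    (hV : x ^ m + y ^ m = f c * (x ^ n + y ^ n)) :
    ((lucasU A B m : ℤ) : R) = c * e * ((lucasU A B n : ℤ) : R) ∧
    ((lucasV A B m : ℤ) : R) = c * ((lucasV A B n : ℤ) : R) := by
  constructor
  · apply hf
    simp only [map_mul, map_intCast]
    apply hd.mul_right_cancel
    rw [mul_assoc, (luc_u A B x y h1 h2 m).1, (luc_u A B x y h1 h2 n).1, hU]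
  · apply hf
    simp only [map_mul, map_intCast]
    rw [(luc_v A B x y h1 h2 m).1, (luc_v A B x y h1 h2 n).1, hV]

theorem stmt18 (p : ℕ) (hp : p.Prime) (hp2 : p ≠ 2) (a : ℕ) (ha : 0 < a)
    (A B : ℤ) (Δ : ℤ) (hΔ : Δ = A ^ 2 - 4 * B)
    (h : ¬ (p : ℤ) ∣ 2 * B * Δ) :
    ((lucasU A B (((p : ℤ) ^ a - jacobiSym Δ (p ^ a)).toNat) : ℤ) : ZMod (p ^ 2)) =
      zmodZPow (B : ZMod (p ^ 2)) ((jacobiSym Δ p - jacobiSym Δ (p ^ a)) / 2) *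
        (jacobiSym Δ (p ^ (a - 1)) : ZMod (p ^ 2)) *
        ((lucasU A B (((p : ℤ) - jacobiSym Δ p).toNat) : ℤ) : ZMod (p ^ 2)) ∧
    ((lucasV A B (((p : ℤ) ^ a - jacobiSym Δ (p ^ a)).toNat) : ℤ) : ZMod (p ^ 2)) =
      zmodZPow (B : ZMod (p ^ 2)) ((jacobiSym Δ p - jacobiSym Δ (p ^ a)) / 2) *
        ((lucasV A B (((p : ℤ) - jacobiSym Δ p).toNat) : ℤ) : ZMod (p ^ 2)) := by
  have hB : ¬ (p : ℤ) ∣ B := fun hh => h ((hh.mul_left 2).mul_right Δ)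
  have h2' : ¬ (p : ℤ) ∣ 2 := fun hh => h ((hh.mul_right B).mul_right Δ)
  have hD : ¬ (p : ℤ) ∣ Δ := fun hh => h (hh.mul_left _)
  have uB := unit_cast hp hB
  have u2 := unit_cast hp h2'
  have uD := unit_cast hp hD
  obtain ⟨S, _, f, hf, x, y, h1, hxy⟩ := quad_ext (ZMod (p ^ 2)) A B
  have vB : IsUnit (B : S) := by simpa using uB.map f
  have v2 : IsUnit (2 : S) := by have := u2.map f; rw [map_intCast] at this; exact_mod_cast this
  have vD : IsUnit (Δ : S) := by simpa using uD.map f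
  have vd : IsUnit (x - y) := by
    have : (Δ : S) = (x - y) * (x - y) := by
      rw [hΔ]; push_cast; rw [← h1, ← hxy]; ring
    rw [this] at vD
    exact isUnit_of_mul_isUnit_left vD
  have vx : IsUnit x := isUnit_of_mul_isUnit_left (hxy ▸ vB)
  have vy : IsUnit y := isUnit_of_mul_isUnit_right (hxy ▸ vB)
  have h0 : (p : S) ^ 2 = 0 := by
    have : ((p ^ 2 : ℕ) : ZMod (p ^ 2)) = 0 := ZMod.natCast_self _
    have := congrArg f this
    rw [map_natCast, map_zero] at this
    exact_mod_cast this
  have h1' : y + x = A := by rw [add_comm, h1]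
  have hxy' : y * x = B := by rw [mul_comm, hxy]
  have hp1 : 1 ≤ p := hp.one_le
  have hpa (k : ℕ) : 1 ≤ p ^ k := Nat.one_le_pow _ _ hp1
  have e1 (k : ℕ) : ((p : ℤ) ^ k - 1).toNat = p ^ k - 1 := by
    have := hpa k
    rw [← Nat.cast_pow]; omega
  have e2 (k : ℕ) : ((p : ℤ) ^ k - -1).toNat = p ^ k + 1 := by
    rw [← Nat.cast_pow]; omega
  have e1' : ((p : ℤ) - 1).toNat = p - 1 := by omega
  have e2' : ((p : ℤ) - -1).toNat = p + 1 := by omega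
  have hgcd : Δ.gcd p = 1 := by
    rw [← Int.isCoprime_iff_gcd_eq_one]
    exact ((Nat.prime_iff_prime_int.1 hp).coprime_iff_not_dvd.2 hD).symm
  obtain ⟨k, rfl⟩ : ∃ k, a = k + 1 := ⟨a - 1, by omega⟩
  simp only [jacobiSym.pow_right, Nat.add_sub_cancel]
  rcases jacobiSym.eq_one_or_neg_one hgcd with hj | hj
  · have hj' := hj
    rw [hΔ] at hj'
    have px := pow_pos_case (lift_pow h0 (frob_pos hp hp2 A B x y h1 hxy v2 hj')) k
    have py := pow_pos_case (lift_pow h0 (frob_pos hp hp2 A B y x h1' hxy' v2 hj')) k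
    simp only [hj, one_pow, e1, e1']
    have qx : x ^ (p ^ (k + 1) - 1) = x ^ (p - 1) := by
      apply vx.mul_right_cancel
      rw [← pow_succ, ← pow_succ, Nat.sub_add_cancel (hpa _), Nat.sub_add_cancel hp1, px]
    have qy : y ^ (p ^ (k + 1) - 1) = y ^ (p - 1) := by
      apply vy.mul_right_cancel
      rw [← pow_succ, ← pow_succ, Nat.sub_add_cancel (hpa _), Nat.sub_add_cancel hp1, py]
    apply transfer f hf A B x y h1 hxy vd
    · simp [zmodZPow, qx, qy]
    · simp [zmodZPow, qx, qy]
  · have hj' := hj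
    rw [hΔ] at hj'
    have lx := lift_pow h0 (frob_neg hp hp2 A B x y h1 hxy v2 hj')
    have ly := lift_pow h0 (frob_neg hp hp2 A B y x h1' hxy' v2 hj')
    rcases Nat.even_or_odd' k with ⟨j, rfl | rfl⟩
    · have px := (pow_neg_case lx ly j).1
      have py := (pow_neg_case ly lx j).1
      have s1 : (-1 : ℤ) ^ (2 * j + 1) = -1 := Odd.neg_one_pow ⟨j, rfl⟩
      have s2 : (-1 : ℤ) ^ (2 * j) = 1 := Even.neg_one_pow ⟨j, by ring⟩
      simp only [hj, s1, s2, e2, e2']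
      apply transfer f hf A B x y h1 hxy vd
      · simp [zmodZPow, pow_succ _ (p ^ _), px, py, pow_succ _ p]
      · simp [zmodZPow, pow_succ _ (p ^ _), px, py, pow_succ _ p]
    · have px := (pow_neg_case lx ly j).2
      have py := (pow_neg_case ly lx j).2
      have s1 : (-1 : ℤ) ^ (2 * j + 1) = -1 := Odd.neg_one_pow ⟨j, rfl⟩
      have s2 : (-1 : ℤ) ^ (2 * j + 1 + 1) = 1 := Even.neg_one_pow ⟨j + 1, by ring⟩
      simp only [hj, s1, s2, e1, e2']
      have qx : (B : S) * x ^ (p ^ (2 * j + 1 + 1) - 1) = y ^ (p + 1) := by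
        rw [pow_succ y, ← px, ← hxy, mul_comm x y, mul_assoc, ← pow_succ',
          Nat.sub_add_cancel (hpa _), mul_comm]
      have qy : (B : S) * y ^ (p ^ (2 * j + 1 + 1) - 1) = x ^ (p + 1) := by
        rw [pow_succ x, ← py, ← hxy, mul_assoc, ← pow_succ',
          Nat.sub_add_cancel (hpa _), mul_comm]
      have hz : zmodZPow (B : ZMod (p ^ 2)) ((-1 - 1) / 2) = (B : ZMod (p ^ 2))⁻¹ := by
        simp [zmodZPow]
      have hi : (B : S) * f ((B : ZMod (p ^ 2))⁻¹) = 1 := by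
        rw [← map_intCast f B, ← map_mul, ZMod.mul_inv_of_unit _ uB, map_one]
      rw [hz]
      apply transfer f hf A B x y h1 hxy vd
      · apply vB.mul_left_cancel
        simp only [Int.cast_neg, Int.cast_one, map_neg, map_one]
        linear_combination qx - qy + (x ^ (p + 1) - y ^ (p + 1)) * hi
      · apply vB.mul_left_cancel
        linear_combination qx + qy - (x ^ (p + 1) + y ^ (p + 1)) * hi
end

section
/- Let p be an odd prime, and let a, m be integers with a > 0 and p ∤ m. Set Δ = m² - 4m. Then 2u_{p^a}(m,m) - u_{p^a}(m-2,1) ≡ (Δ/p^a)·m^{p-1} + u_{p^a-(Δ/p^a)}(m-2,1) (mod p²). -/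
theorem lucasU_succ2 (A B : ℤ) (n : ℕ) :
    lucasU A B (n + 2) = A * lucasU A B (n + 1) - B * lucasU A B n := rfl

theorem lucas_norm (m : ℤ) (k : ℕ) :
    lucasU (m - 2) 1 (k + 1) ^ 2 + lucasU (m - 2) 1 k ^ 2
      - (m - 2) * lucasU (m - 2) 1 (k + 1) * lucasU (m - 2) 1 k = 1 := by
  induction k with
  | zero => simp [lucasU]
  | succ k ih => rw [lucasU_succ2]; linear_combination ih

theorem lucas_double (m : ℤ) (k : ℕ) :
    lucasU (m - 2) 1 (2 * k) = lucasU (m - 2) 1 k *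
        (2 * lucasU (m - 2) 1 (k + 1) - (m - 2) * lucasU (m - 2) 1 k) ∧
    lucasU (m - 2) 1 (2 * k + 1) = lucasU (m - 2) 1 (k + 1) ^ 2 - lucasU (m - 2) 1 k ^ 2 := by
  induction k with
  | zero => simp [lucasU]
  | succ k ih =>
    obtain ⟨h1, h2⟩ := ih
    have e : 2 * (k + 1) = 2 * k + 2 := by ring
    have h3 := lucasU_succ2 (m - 2) 1 (2 * k)
    have h4 := lucasU_succ2 (m - 2) 1 (2 * k + 1)
    have h5 := lucasU_succ2 (m - 2) 1 k
    rw [e, show 2 * k + 2 + 1 = 2 * k + 1 + 2 by ring, h4,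
      show 2 * k + 1 + 1 = 2 * k + 2 by ring, h3, h1, h2,
      show k + 1 + 1 = k + 2 by ring, h5]
    constructor <;> ring

theorem lucas_mm (m : ℤ) (k : ℕ) :
    lucasU m m (2 * k + 1) = m ^ k * (lucasU (m - 2) 1 (k + 1) + lucasU (m - 2) 1 k) ∧
    lucasU m m (2 * k + 2) = m ^ (k + 1) * lucasU (m - 2) 1 (k + 1) := by
  induction k with
  | zero => simp [lucasU]
  | succ k ih =>
    obtain ⟨h1, h2⟩ := ih
    have h3 := lucasU_succ2 m m (2 * k + 1)
    have h4 := lucasU_succ2 m m (2 * k + 2)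
    have h5 := lucasU_succ2 (m - 2) 1 k
    rw [show 2 * (k + 1) + 1 = 2 * k + 1 + 2 by ring,
      show 2 * (k + 1) + 2 = 2 * k + 2 + 2 by ring, h4,
      show 2 * k + 2 + 1 = 2 * k + 1 + 2 by ring, h3,
      show 2 * k + 1 + 1 = 2 * k + 2 by ring, h1, h2,
      show k + 1 + 1 = k + 2 by ring, h5]
    constructor <;> ring

theorem lucas_zsqrt (m : ℤ) (n : ℕ) :
    (2 : ℤ√(m ^ 2 - 4 * m)) * (⟨m, 1⟩ : ℤ√(m ^ 2 - 4 * m)) ^ n =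
      ⟨2 ^ n * (2 * lucasU m m (n + 1) - m * lucasU m m n), 2 ^ n * lucasU m m n⟩ := by
  induction n with
  | zero => ext <;> simp [lucasU]
  | succ n ih =>
    rw [pow_succ (⟨m, 1⟩ : ℤ√(m ^ 2 - 4 * m)), ← mul_assoc, ih, show n + 1 + 1 = n + 2 by ring, lucasU_succ2]
    ext <;> simp <;> ring

theorem lucas_mod_p (p : ℕ) (hp : p.Prime) (hp2 : p ≠ 2) (a : ℕ) (m : ℤ) (k : ℕ)
    (hk : p ^ a = 2 * k + 1) :
    lucasU m m (2 * k + 1) ≡ (m ^ 2 - 4 * m) ^ k [ZMOD p] ∧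
    2 * lucasU m m (2 * k + 2) - m * lucasU m m (2 * k + 1) ≡ m [ZMOD p] := by
  have := Fact.mk hp
  obtain ⟨r, hr⟩ := exists_add_pow_prime_pow_eq hp
    (⟨m, 0⟩ : ℤ√(m ^ 2 - 4 * m)) ⟨0, 1⟩ a
  have h0 : (⟨m, 0⟩ : ℤ√(m ^ 2 - 4 * m)) + ⟨0, 1⟩ = ⟨m, 1⟩ := by ext <;> simp
  have h1 : (⟨m, 0⟩ : ℤ√(m ^ 2 - 4 * m)) ^ (p ^ a) = ((m ^ (p ^ a) : ℤ) : ℤ√(m ^ 2 - 4 * m)) := by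
    push_cast; congr 1
  have h2 : (⟨0, 1⟩ : ℤ√(m ^ 2 - 4 * m)) ^ (p ^ a) =
      (((m ^ 2 - 4 * m) ^ k : ℤ) : ℤ√(m ^ 2 - 4 * m)) * ⟨0, 1⟩ := by
    have : (⟨0, 1⟩ : ℤ√(m ^ 2 - 4 * m)) ^ 2 = ((m ^ 2 - 4 * m : ℤ) : ℤ√(m ^ 2 - 4 * m)) := by
      rw [pow_two (⟨0, 1⟩ : ℤ√(m ^ 2 - 4 * m))]; ext <;> simp only [Zsqrtd.re_intCast, Zsqrtd.im_intCast, Zsqrtd.re_mul, Zsqrtd.im_mul] <;> ring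
    rw [hk, pow_succ (⟨0, 1⟩ : ℤ√(m ^ 2 - 4 * m)), pow_mul, this, Int.cast_pow]
  have h3 := lucas_zsqrt m (p ^ a)
  rw [← h0, hr, h1, h2] at h3
  have hre := congrArg Zsqrtd.re h3
  have him := congrArg Zsqrtd.im h3
  have e1 : ((m ^ (p ^ a) : ℤ) : ℤ√(m ^ 2 - 4 * m)) = ⟨m ^ (p ^ a), 0⟩ := by ext <;> simp only [Zsqrtd.re_intCast, Zsqrtd.im_intCast]
  have e2 : (((m ^ 2 - 4 * m) ^ k : ℤ) : ℤ√(m ^ 2 - 4 * m)) = ⟨(m ^ 2 - 4 * m) ^ k, 0⟩ := by ext <;> simp only [Zsqrtd.re_intCast, Zsqrtd.im_intCast]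
  rw [e1, e2] at hre him
  simp at hre him
  have f2 : ((2 : ℤ) : ZMod p) ^ (p ^ a) = 2 := by rw [ZMod.pow_card_pow]; simp
  have fm : ((m : ℤ) : ZMod p) ^ (p ^ a) = m := ZMod.pow_card_pow _
  have c2 : (2 : ZMod p) ≠ 0 := by
    intro h
    have : ((2 : ℕ) : ZMod p) = 0 := by exact_mod_cast h
    rw [ZMod.natCast_eq_zero_iff] at this
    exact hp2 ((Nat.prime_dvd_prime_iff_eq hp Nat.prime_two).1 this)
  have gre := congrArg (Int.cast : ℤ → ZMod p) hre
  have gim := congrArg (Int.cast : ℤ → ZMod p) him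
  push_cast at gre gim f2
  simp only [f2, fm, CharP.cast_eq_zero, zero_mul, mul_zero, add_zero] at gre gim
  rw [hk] at gre gim
  constructor
  · rw [← ZMod.intCast_eq_intCast_iff]
    push_cast
    exact (mul_left_cancel₀ c2 gim).symm
  · rw [← ZMod.intCast_eq_intCast_iff]
    push_cast
    exact (mul_left_cancel₀ c2 gre).symm

theorem jacobi_mod (p : ℕ) (hp : p.Prime) (hp2 : p ≠ 2) (D : ℤ) : ∀ (a k : ℕ),
    p ^ a = 2 * k + 1 → D ^ k ≡ jacobiSym D (p ^ a) [ZMOD p] := by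
  have := Fact.mk hp
  intro a
  induction a with
  | zero =>
    intro k hk
    have : k = 0 := by simp at hk; omega
    subst this; simp
  | succ a ih =>
    intro k hk
    obtain ⟨j, hj⟩ : Odd (p ^ a) := (hp.odd_of_ne_two hp2).pow
    obtain ⟨q, hq⟩ := hp.odd_of_ne_two hp2
    have e : k = j * p + q := by
      rw [pow_succ, hj] at hk
      have : (2 * j + 1) * p = 2 * (j * p) + p := by ring
      omega
    rw [pow_succ p a, jacobiSym.mul_right, ← jacobiSym.legendreSym.to_jacobiSym p D, e, pow_add, pow_mul]
    apply Int.ModEq.mul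
    · refine Int.ModEq.trans ?_ (ih j hj)
      rw [← ZMod.intCast_eq_intCast_iff]; push_cast; exact ZMod.pow_card _
    · rw [← ZMod.intCast_eq_intCast_iff, legendreSym.eq_pow]
      push_cast; congr 1; omega

theorem stmt19 (p : ℕ) (hp : p.Prime) (hp2 : p ≠ 2) (a : ℕ) (ha : 0 < a)
    (m : ℤ) (hm : ¬ (p : ℤ) ∣ m) (Δ : ℤ) (hΔ : Δ = m ^ 2 - 4 * m) :
    2 * lucasU m m (p ^ a) - lucasU (m - 2) 1 (p ^ a) ≡
      jacobiSym Δ (p ^ a) * m ^ (p - 1) +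
        lucasU (m - 2) 1 (((p : ℤ) ^ a - jacobiSym Δ (p ^ a)).toNat)
      [ZMOD (p : ℤ) ^ 2] := by
  have := Fact.mk hp
  subst hΔ
  obtain ⟨k, hk⟩ : Odd (p ^ a) := (hp.odd_of_ne_two hp2).pow
  have hkz : (p : ℤ) ^ a = 2 * k + 1 := by exact_mod_cast hk
  obtain ⟨g1, g2⟩ := lucas_mod_p p hp hp2 a m k hk
  have g3 := jacobi_mod p hp hp2 (m ^ 2 - 4 * m) a k hk
  have hε := jacobiSym.trichotomy (m ^ 2 - 4 * m) (p ^ a)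
  rw [hkz]
  generalize jacobiSym (m ^ 2 - 4 * m) (p ^ a) = ε at *
  obtain ⟨q1, q2⟩ := lucas_mm m k
  obtain ⟨d1, d2⟩ := lucas_double m k
  have d3 := lucasU_succ2 (m - 2) 1 (2 * k)
  have nn := lucas_norm m k
  rw [hk]
  rw [q1, q2] at g2
  rw [q1] at g1
  rw [q1]
  generalize lucasU (m - 2) 1 (k + 1) = x at *
  generalize lucasU (m - 2) 1 k = y at *
  have hpp : Prime (p : ℤ) := Nat.prime_iff_prime_int.1 hp
  -- w^2 ≡ m^(p-1) mod p^2
  have hw : (p : ℤ) ^ 2 ∣ (m ^ k) ^ 2 - m ^ (p - 1) := by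
    obtain ⟨b, rfl⟩ : ∃ b, a = b + 1 := ⟨a - 1, by omega⟩
    obtain ⟨c, hc⟩ : (p - 1) ∣ p ^ b - 1 := by simpa using Nat.sub_dvd_pow_sub_pow p 1 b
    have hb : 1 ≤ p ^ b := Nat.one_le_pow _ _ hp.pos
    have hp1 := hp.one_lt
    have e : k * 2 = (p - 1) + (p * (p - 1)) * c := by
      have h1 : p ^ b = (p - 1) * c + 1 := by omega
      rw [pow_succ, h1] at hk
      have : ((p - 1) * c + 1) * p = p * (p - 1) * c + p := by ring
      omega
    have ht : m ^ (p * (p - 1)) ≡ 1 [ZMOD (p : ℤ) ^ 2] := by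
      have hcop : IsCoprime m ((p ^ 2 : ℕ) : ℤ) := by
        push_cast
        exact (IsCoprime.pow_left ((Prime.coprime_iff_not_dvd hpp).2 hm)).symm
      have hu : IsUnit ((m : ℤ) : ZMod (p ^ 2)) := (ZMod.coe_int_isUnit_iff_isCoprime m (p ^ 2)).2 hcop.symm
      obtain ⟨u, hu⟩ := hu
      have h1 := congrArg Units.val (ZMod.pow_totient u)
      rw [Nat.totient_prime_pow hp (by norm_num), Units.val_pow_eq_pow_val, hu] at h1
      have h2 : m ^ (p * (p - 1)) ≡ 1 [ZMOD ((p ^ 2 : ℕ) : ℤ)] := by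
        rw [← ZMod.intCast_eq_intCast_iff]
        simpa using h1
      simpa using h2
    rw [← pow_mul, e, pow_add, pow_mul]
    have h2 := (ht.pow c).mul_left (m ^ (p - 1))
    rw [one_pow, mul_one] at h2
    exact h2.symm.dvd
  have hw1 : (p : ℤ) ∣ (m ^ k) ^ 2 - 1 := by
    have h1 : m ^ (p - 1) ≡ 1 [ZMOD p] :=
      Int.ModEq.pow_card_sub_one_eq_one hp ((Prime.coprime_iff_not_dvd hpp).2 hm).symm
    have := (Dvd.dvd.trans (dvd_pow_self (p : ℤ) two_ne_zero) hw)
    have := dvd_add this h1.symm.dvd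
    simpa using this
  have g4 := (g1.trans g3).symm.dvd
  have g5 := g2.symm.dvd
  rw [pow_succ] at g5
  generalize m ^ k = w at *
  generalize m ^ (p - 1) = M at *
  -- d ≡ w
  have hd : (p : ℤ) ∣ (x - y) - w := by
    have h1 : (p : ℤ) ∣ m * (w * (x - y) - 1) := by convert g5 using 1; ring
    have h2 := (hpp.dvd_or_dvd h1).resolve_left hm
    have := dvd_sub (h2.mul_left w) (hw1.mul_left (x - y))
    rwa [show w * (w * (x - y) - 1) - (x - y) * (w ^ 2 - 1) = x - y - w by ring] at this
  have hs : (p : ℤ) ∣ (x + y) - w * ε := by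
    have := dvd_sub (g4.mul_left w) (hw1.mul_left (x + y))
    rwa [show w * (w * (x + y) - ε) - (x + y) * (w ^ 2 - 1) = x + y - w * ε by ring] at this
  clear g1 g2 g3 g4 g5 q1 q2
  obtain ⟨D, hD⟩ := hd
  obtain ⟨S, hS⟩ := hs
  obtain ⟨W, hW⟩ := hw
  have hcop2 : IsCoprime ((p : ℤ) ^ 2) 2 := by
    have : Nat.Coprime (p ^ 2) 2 := ((hp.odd_of_ne_two hp2).pow).coprime_two_right
    exact_mod_cast Nat.isCoprime_iff_coprime.2 this
  apply Int.ModEq.symm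
  rw [Int.modEq_iff_dvd]
  apply hcop2.dvd_of_dvd_mul_left
  have hw' : M = w ^ 2 - p ^ 2 * W := by linarith
  have hx : (x - y) = w + p * D := by linarith
  have hy : (x + y) = w * ε + p * S := by linarith
  rcases hε with h | h | h <;> subst h
  · rw [show (2 * (k : ℤ) + 1 - 0).toNat = 2 * k + 1 by omega, d2]
    refine ⟨-4 * S * D, ?_⟩
    have e1 : x ^ 2 - y ^ 2 = p * S * (w + p * D) := by
      rw [← hx]; linear_combination (x - y) * hy
    rw [e1, hy]; ring
  · rw [show (2 * (k : ℤ) + 1 - 1).toNat = 2 * k by omega, d1, d2]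
    apply hcop2.dvd_of_dvd_mul_left
    refine ⟨m * (S - D) ^ 2 - 4 * S ^ 2 + 4 * W, ?_⟩
    have e1 : (p : ℤ) * S = x + y - w := by linarith
    have e2 : (p : ℤ) * D = x - y - w := by linarith
    rw [hw']
    linear_combination -(m * (p * S - p * D + 2 * y)) * (e1 - e2) + 4 * (p * S + (x + y - w)) * e1
  · rw [show (2 * (k : ℤ) + 1 - -1).toNat = 2 * k + 2 by omega, d3, d1, d2]
    apply hcop2.dvd_of_dvd_mul_left
    refine ⟨-(m * (S + D) ^ 2 - 4 * S ^ 2 + 4 * W), ?_⟩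
    have e1 : (p : ℤ) * S = x + y + w := by linarith
    have e2 : (p : ℤ) * D = x - y - w := by linarith
    rw [hw']
    linear_combination (m * (p * S + p * D + 2 * x)) * (e1 + e2) - 4 * (p * S + (x + y + w)) * e1
end
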